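/- Let A be an abelian category with enough projectives and finite global dimension d. If C is an acyclic cochain complex in A all of whose components are projective, then C is contractible (i.e., zero in the homotopy category K(A)). -/

import Mathlib

open CategoryTheory CategoryTheory.Limits

noncomputable section

universe w v u

/-- The short complex `Z^j ⟶ C^j ⟶ Z^i`. -/
abbrev cycSC {A : Type u} [Category.{v} A] [Abelian A] (C : CochainComplex A ℤ) (i j : ℤ) :
    ShortComplex A :=
  ShortComplex.mk (C.iCycles j) (C.toCycles j i) (by
    rw [← cancel_mono (C.iCycles i)]
    simp)

lemma cycSC_shortExact {A : Type u} [Category.{v} A] [Abelian A] (C : CochainComplex A ℤ)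
    (hac : ∀ n, C.ExactAt n) (i j : ℤ) (h : j + 1 = i) : (cycSC C i j).ShortExact := by
  have h1 : Mono (cycSC C i j).f := by dsimp [cycSC]; infer_instance
  have h2 : Epi (cycSC C i j).g := by
    dsimp [cycSC]
    have hp : (ComplexShape.up ℤ).prev i = j := (ComplexShape.up ℤ).prev_eq' h
    subst hp
    exact ShortComplex.Exact.epi_toCycles (hac i)
  refine ⟨?_⟩
  apply ShortComplex.exact_of_f_is_kernel
  refine KernelFork.IsLimit.ofι' _ _ (fun {B} k hk => ⟨C.liftCycles k i ?_ ?_, ?_⟩)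
  · exact (ComplexShape.up ℤ).next_eq' h
  · dsimp [cycSC] at hk
    rw [← C.toCycles_i j i, ← Category.assoc, hk, zero_comp]
  · dsimp [cycSC]
    simp

lemma cycles_ext_vanish {A : Type u} [Category.{v} A] [Abelian A] [HasExt.{w} A] (d : ℕ)
    (hgl : ∀ X Y : A, Subsingleton (Abelian.Ext X Y (d + 1)))
    (C : CochainComplex A ℤ) (hproj : ∀ n, Projective (C.X n))
    (hac : ∀ n, C.ExactAt n) : ∀ n Y, Subsingleton (Abelian.Ext (C.cycles n) Y 1) := by
  have key : ∀ k : ℕ, (∀ n Y, Subsingleton (Abelian.Ext (C.cycles n) Y (k + 1))) →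
      ∀ n Y, Subsingleton (Abelian.Ext (C.cycles n) Y 1) := by
    intro k
    induction k with
    | zero => intro h; exact h
    | succ k ih =>
      intro h
      apply ih
      intro n Y
      refine subsingleton_of_forall_eq 0 (fun x => ?_)
      have := hproj n
      obtain ⟨x₂, hx⟩ := Abelian.Ext.contravariant_sequence_exact₁
        (cycSC_shortExact C hac (n + 1) n rfl) Y x (add_comm 1 (k + 1))
        ((h (n + 1) Y).elim _ _)
      have h0 : x₂ = 0 := Abelian.Ext.eq_zero_of_projective (P := C.X n) x₂
      subst h0
      exact hx.symm.trans (Abelian.Ext.comp_zero _ _ _ _ _)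
  exact key d (fun n Y => hgl _ _)

end

/-- In an abelian category with enough projectives and finite global
dimension `d` (i.e. `Ext^{d+1}` vanishes identically), every acyclic cochain complex
all of whose components are projective is contractible. -/
theorem stmt_4 {A : Type u} [Category.{v} A] [Abelian A] [EnoughProjectives A]
    [HasExt.{w} A] (d : ℕ)
    (hgl : ∀ X Y : A, Subsingleton (Abelian.Ext X Y (d + 1)))
    (C : CochainComplex A ℤ) (hproj : ∀ n, Projective (C.X n))
    (hac : ∀ n, C.ExactAt n) :
    Nonempty (Homotopy (𝟙 C) 0) := by
  classical
  have hZ : ∀ n, Projective (C.cycles n) := fun n => by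
    rw [projective_iff_subsingleton_ext_one]
    exact fun Y => cycles_ext_vanish d hgl C hproj hac n Y
  have σ : ∀ i j : ℤ, j + 1 = i → (cycSC C i j).Splitting := fun i j h => by
    have : Projective (cycSC C i j).X₃ := hZ i
    exact (cycSC_shortExact C hac i j h).splittingOfProjective
  let r : ∀ i : ℤ, C.X i ⟶ C.cycles i := fun i => (σ (i + 1) i rfl).r
  let s : ∀ i j : ℤ, j + 1 = i → (C.cycles i ⟶ C.X j) := fun i j h => (σ i j h).s
  have hs : ∀ i j h, s i j h ≫ C.toCycles j i = 𝟙 _ := fun i j h => (σ i j h).s_g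
  have hr : ∀ i, C.iCycles i ≫ r i = 𝟙 _ := fun i => (σ (i + 1) i rfl).f_r
  have hid : ∀ i, r i ≫ C.iCycles i + C.toCycles i (i + 1) ≫ s (i + 1) i rfl = 𝟙 _ :=
    fun i => (σ (i + 1) i rfl).id
  refine ⟨{ hom := fun i j => if h : j + 1 = i then r i ≫ s i j h else 0
            zero := fun i j h => dif_neg h
            comm := fun i => ?_ }⟩
  have e1 : (ComplexShape.up ℤ).Rel i (i + 1) := rfl
  have e2 : (ComplexShape.up ℤ).Rel (i - 1) i := by simp
  rw [dNext_eq _ e1, prevD_eq _ e2, dif_pos rfl, dif_pos (by lia)]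
  rw [← C.toCycles_i i (i + 1), ← C.toCycles_i (i - 1) i]
  simp only [Category.assoc, reassoc_of% hr, reassoc_of% hs]
  rw [add_comm (C.toCycles i (i + 1) ≫ _), hid]
  simp
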